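/- arXiv:2107.14487 — 2 statements merged into one kernel-verified Lean document; each statement's English description precedes it below -/
import Mathlib

section
/- Let S be a CFCST system over Σ. For every x → s ∈ S, the structural rule (p^x_s) is eliminable in G3Km(S) + {(Pr_⟨x⟩) : x ∈ Σ} − {(C1^x) : x ∈ Σ}: every labelled sequent derivable in the calculus whose rules are (id), (∨r), (∧r), ([x]), (⟨x⟩), the propagation rules (Pr_⟨x⟩) (x ∈ Σ) and the structural rules (p^x_s) (x → s ∈ S) is derivable in this calculus without any use of the rules (p^x_s). -/
/-!
Labelled sequent calculi for context-free grammar logics with converse.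
-/

namespace GrammarLogic

/-- Modal formulae in negation normal form over the alphabet `α`:
literals `p`, `p̄`, and the connectives `∨`, `∧`, `⟨x⟩`, `[x]` (`x ∈ α`). -/
inductive Fml (α : Type) : Type
  | pos : ℕ → Fml α
  | neg : ℕ → Fml α
  | or  : Fml α → Fml α → Fml α
  | and : Fml α → Fml α → Fml α
  | dia : α → Fml α → Fml α
  | box : α → Fml α → Fml α

/-- Multisets of relational atoms `R_x w u` (labels are natural numbers). -/
abbrev RAtms (α : Type) : Type := Multiset (α × ℕ × ℕ)

/-- Multisets of labelled formulae `w : φ`. -/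
abbrev LFmls (α : Type) : Type := Multiset (ℕ × Fml α)

/-- The converse `s̄` of a string: reverse and apply the converse characterwise. -/
def strConv {α : Type} (bar : α → α) (s : List α) : List α := s.reverse.map bar

/-- A context-free converse-closed string rewriting (CFCST) system over `α`
with converse operation `bar`: a finite set of production rules closed under
converses. -/
structure CFCST (α : Type) (bar : α → α) : Type where
  rules : Set (α × List α)
  finite : rules.Finite
  closed : ∀ x s, (x, s) ∈ rules ↔ (bar x, strConv bar s) ∈ rules

/-- One-step rewriting: replace an occurrence of the head of a production rule
by its body. -/
def OneStep {α : Type} (P : Set (α × List α)) (s t : List α) : Prop :=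
  ∃ u v x r, (x, r) ∈ P ∧ s = u ++ x :: v ∧ t = u ++ r ++ v

/-- `Lang P x s` iff `x →*_S s`, i.e. `s ∈ L_S(x)`. -/
def Lang {α : Type} (P : Set (α × List α)) (x : α) (s : List α) : Prop :=
  Relation.ReflTransGen (OneStep P) [x] s

/-- Edges of the propagation graph determined by the relational atoms `R`:
each `R_x w u` in `R` gives an edge `(w,u)` labelled `x` and an edge `(u,w)`
labelled `x̄`. -/
def Edge {α : Type} (bar : α → α) (R : RAtms α) (w u : ℕ) (c : α) : Prop :=
  (c, w, u) ∈ R ∨ (bar c, u, w) ∈ R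

/-- `PPath bar R w u s`: there is a (possibly empty) propagation path from `w`
to `u` in the propagation graph determined by `R` whose string is `s`. -/
inductive PPath {α : Type} (bar : α → α) (R : RAtms α) : ℕ → ℕ → List α → Prop
  | nil (w : ℕ) : PPath bar R w w []
  | cons {w u v : ℕ} {c : α} {s : List α} :
      Edge bar R w u c → PPath bar R u v s → PPath bar R w v (c :: s)

/-- Side condition of the propagation rule `(Pr_⟨x⟩)`: there is a propagation
path from `w` to `u` whose string belongs to `L_S(x)`. -/
def PropCond {α : Type} (bar : α → α) (P : Set (α × List α)) (R : RAtms α)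
    (x : α) (w u : ℕ) : Prop :=
  ∃ s, PPath bar R w u s ∧ Lang P x s

/-- The label `v` occurs in the labelled sequent `R ⊢ Γ`. -/
def occursIn {α : Type} (v : ℕ) (R : RAtms α) (Γ : LFmls α) : Prop :=
  (∃ x w u, (x, w, u) ∈ R ∧ (v = w ∨ v = u)) ∨ ∃ φ, (v, φ) ∈ Γ

/-- `ChainR s w u C`: the multiset `C` is a chain of relational atoms `R_s w u`
(for `s = ε` it is empty and `u = w`). -/
inductive ChainR {α : Type} : List α → ℕ → ℕ → RAtms α → Prop
  | nil (w : ℕ) : ChainR [] w w 0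
  | cons {y : α} {s : List α} {w v u : ℕ} {C : RAtms α} :
      ChainR s v u C → ChainR (y :: s) w u ((y, w, v) ::ₘ C)

/-- Gated labelled sequent calculi for grammar logics.  The rules `(id)`, `(∨r)`,
`(∧r)` and `([x])` are always present; the rules `(⟨x⟩)`, the propagation rules
`(Pr_⟨x⟩)`, the structural rules `(p^x_s)` (for `x → s ∈ P`) and the converse
rules `(C1^x)` are present exactly when the respective gates `gDia`, `gPr`,
`gProd`, `gCnv` hold.  In particular, `Der bar P True False True True` is the
labelled calculus `G3Km(S)` and `Der bar P False True False False` is the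
refined labelled calculus `Km(S)L`. -/
inductive Der {α : Type} (bar : α → α) (P : Set (α × List α))
    (gDia gPr gProd gCnv : Prop) : RAtms α → LFmls α → Prop
  | id (R : RAtms α) (Γ : LFmls α) (w p : ℕ) :
      Der bar P gDia gPr gProd gCnv R ((w, Fml.pos p) ::ₘ (w, Fml.neg p) ::ₘ Γ)
  | orr {R : RAtms α} {Γ : LFmls α} {w : ℕ} {φ ψ : Fml α} :
      Der bar P gDia gPr gProd gCnv R ((w, φ) ::ₘ (w, ψ) ::ₘ Γ) →
      Der bar P gDia gPr gProd gCnv R ((w, Fml.or φ ψ) ::ₘ Γ)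
  | andr {R : RAtms α} {Γ : LFmls α} {w : ℕ} {φ ψ : Fml α} :
      Der bar P gDia gPr gProd gCnv R ((w, φ) ::ₘ Γ) →
      Der bar P gDia gPr gProd gCnv R ((w, ψ) ::ₘ Γ) →
      Der bar P gDia gPr gProd gCnv R ((w, Fml.and φ ψ) ::ₘ Γ)
  | boxr {R : RAtms α} {Γ : LFmls α} {w u : ℕ} {x : α} {φ : Fml α} :
      ¬ occursIn u R ((w, Fml.box x φ) ::ₘ Γ) →
      Der bar P gDia gPr gProd gCnv ((x, w, u) ::ₘ R) ((u, φ) ::ₘ Γ) →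
      Der bar P gDia gPr gProd gCnv R ((w, Fml.box x φ) ::ₘ Γ)
  | diar {R : RAtms α} {Γ : LFmls α} {w u : ℕ} {x : α} {φ : Fml α} :
      gDia →
      Der bar P gDia gPr gProd gCnv ((x, w, u) ::ₘ R)
        ((w, Fml.dia x φ) ::ₘ (u, φ) ::ₘ Γ) →
      Der bar P gDia gPr gProd gCnv ((x, w, u) ::ₘ R) ((w, Fml.dia x φ) ::ₘ Γ)
  | pr {R : RAtms α} {Γ : LFmls α} {w u : ℕ} {x : α} {φ : Fml α} :
      gPr → PropCond bar P R x w u →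
      Der bar P gDia gPr gProd gCnv R ((w, Fml.dia x φ) ::ₘ (u, φ) ::ₘ Γ) →
      Der bar P gDia gPr gProd gCnv R ((w, Fml.dia x φ) ::ₘ Γ)
  | prodr {R C : RAtms α} {Γ : LFmls α} {x : α} {s : List α} {w u : ℕ} :
      gProd → (x, s) ∈ P → ChainR s w u C →
      Der bar P gDia gPr gProd gCnv (C + ((x, w, u) ::ₘ R)) Γ →
      Der bar P gDia gPr gProd gCnv (C + R) Γ
  | cnvr {R : RAtms α} {Γ : LFmls α} {x : α} {w u : ℕ} :
      gCnv →
      Der bar P gDia gPr gProd gCnv ((x, w, u) ::ₘ (bar x, u, w) ::ₘ R) Γ →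
      Der bar P gDia gPr gProd gCnv ((x, w, u) ::ₘ R) Γ

/-- The labelled calculus `G3Km(S)`. -/
abbrev G3Km {α : Type} (bar : α → α) (S : CFCST α bar) : RAtms α → LFmls α → Prop :=
  Der bar S.rules True False True True

/-- The refined labelled calculus `Km(S)L`. -/
abbrev KmL {α : Type} (bar : α → α) (S : CFCST α bar) : RAtms α → LFmls α → Prop :=
  Der bar S.rules False True False False

theorem Edge.mono {α : Type} {bar : α → α} {R R' : RAtms α} (h : R ⊆ R') {w u : ℕ} {c : α}
    (e : Edge bar R w u c) : Edge bar R' w u c :=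
  e.imp (fun m => h m) (fun m => h m)

theorem PPath.mono {α : Type} {bar : α → α} {R R' : RAtms α} (h : R ⊆ R') {w u : ℕ} {s : List α}
    (p : PPath bar R w u s) : PPath bar R' w u s := by
  induction p with
  | nil w => exact PPath.nil w
  | cons e _ ih => exact PPath.cons (e.mono h) ih

theorem PPath.append {α : Type} {bar : α → α} {R : RAtms α} {w u v : ℕ} {s t : List α}
    (p : PPath bar R w u s) (q : PPath bar R u v t) : PPath bar R w v (s ++ t) := by
  induction p with
  | nil w => exact q
  | cons e _ ih => exact PPath.cons e (ih q)

theorem PPath.conv {α : Type} {bar : α → α} (hbar : Function.Involutive bar) {R : RAtms α}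
    {w u : ℕ} {s : List α} (p : PPath bar R w u s) : PPath bar R u w (strConv bar s) := by
  induction p with
  | nil w => exact PPath.nil w
  | @cons w u v c s e _ ih =>
    have e' : Edge bar R u w (bar c) := by
      rcases e with e | e
      · right; rw [hbar c]; exact e
      · left; exact e
    have := ih.append (PPath.cons e' (PPath.nil w))
    simpa [strConv] using this

theorem steps_ctx {α : Type} {P : Set (α × List α)} (a b : List α) {s t : List α}
    (h : Relation.ReflTransGen (OneStep P) s t) :
    Relation.ReflTransGen (OneStep P) (a ++ s ++ b) (a ++ t ++ b) := by
  induction h with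
  | refl => exact Relation.ReflTransGen.refl
  | tail _ h2 ih =>
    refine ih.tail ?_
    obtain ⟨u, v, x, r, hr, rfl, rfl⟩ := h2
    exact ⟨a ++ u, v ++ b, x, r, hr, by simp, by simp⟩

theorem steps_append {α : Type} {P : Set (α × List α)} {s t s' t' : List α}
    (h : Relation.ReflTransGen (OneStep P) s t) (h' : Relation.ReflTransGen (OneStep P) s' t') :
    Relation.ReflTransGen (OneStep P) (s ++ s') (t ++ t') := by
  have h1 := steps_ctx [] s' h
  have h2 := steps_ctx t [] h'
  simp only [List.nil_append, List.append_nil] at h1 h2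
  exact h1.trans h2

theorem steps_conv {α : Type} {bar : α → α} (S : CFCST α bar) {s t : List α}
    (h : Relation.ReflTransGen (OneStep S.rules) s t) :
    Relation.ReflTransGen (OneStep S.rules) (strConv bar s) (strConv bar t) := by
  induction h with
  | refl => exact Relation.ReflTransGen.refl
  | tail _ h2 ih =>
    refine ih.tail ?_
    obtain ⟨u, v, x, r, hr, rfl, rfl⟩ := h2
    exact ⟨strConv bar v, strConv bar u, bar x, strConv bar r, (S.closed x r).1 hr,
      by simp [strConv], by simp [strConv]⟩

/-- Every atom of `R` is simulated by a propagation path of `R'`. -/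
def Sim {α : Type} (bar : α → α) (P : Set (α × List α)) (R R' : RAtms α) : Prop :=
  ∀ x w u, (x, w, u) ∈ R → PropCond bar P R' x w u

theorem propCond_of_mem {α : Type} {bar : α → α} {P : Set (α × List α)} {R : RAtms α}
    {x : α} {w u : ℕ} (h : (x, w, u) ∈ R) : PropCond bar P R x w u :=
  ⟨[x], PPath.cons (Or.inl h) (PPath.nil u), Relation.ReflTransGen.refl⟩

theorem PropCond.mono {α : Type} {bar : α → α} {P : Set (α × List α)} {R R' : RAtms α}
    (h : R ⊆ R') {x : α} {w u : ℕ} (p : PropCond bar P R x w u) : PropCond bar P R' x w u := by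
  obtain ⟨s, p, l⟩ := p
  exact ⟨s, p.mono h, l⟩

theorem Sim.path {α : Type} {bar : α → α} (hbar : Function.Involutive bar) {S : CFCST α bar}
    {R R' : RAtms α} (h : Sim bar S.rules R R') {w u : ℕ} {s : List α} (p : PPath bar R w u s) :
    ∃ t, PPath bar R' w u t ∧ Relation.ReflTransGen (OneStep S.rules) s t := by
  induction p with
  | nil w => exact ⟨[], PPath.nil w, Relation.ReflTransGen.refl⟩
  | @cons w u v c s e _ ih =>
    obtain ⟨t, q, l⟩ := ih
    have hc : ∃ t, PPath bar R' w u t ∧ Relation.ReflTransGen (OneStep S.rules) [c] t := by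
      rcases e with e | e
      · exact h _ _ _ e
      · obtain ⟨t, q, l⟩ := h _ _ _ e
        refine ⟨_, q.conv hbar, ?_⟩
        have := steps_conv S l
        simpa [strConv, hbar c] using this
    obtain ⟨t', q', l'⟩ := hc
    exact ⟨t' ++ t, q'.append q, steps_append l' l⟩

theorem Sim.propCond {α : Type} {bar : α → α} (hbar : Function.Involutive bar) {S : CFCST α bar}
    {R R' : RAtms α} (h : Sim bar S.rules R R') {x : α} {w u : ℕ}
    (p : PropCond bar S.rules R x w u) : PropCond bar S.rules R' x w u := by
  obtain ⟨s, p, l⟩ := p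
  obtain ⟨t, q, l'⟩ := h.path hbar p
  exact ⟨t, q, Relation.ReflTransGen.trans l l'⟩

theorem ChainR.path {α : Type} (bar : α → α) {s : List α} {w u : ℕ} {C : RAtms α}
    (h : ChainR s w u C) : PPath bar C w u s := by
  induction h with
  | nil w => exact PPath.nil w
  | cons _ ih =>
    exact PPath.cons (Or.inl (Multiset.mem_cons_self _ _))
      (ih.mono (Multiset.subset_cons _ _))

theorem elim_aux {α : Type} (bar : α → α) (hbar : Function.Involutive bar)
    (S : CFCST α bar) (R : RAtms α) (Γ : LFmls α)
    (h : Der bar S.rules True True True False R Γ) :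
    ∀ R', R' ⊆ R → Sim bar S.rules R R' → Der bar S.rules True True False False R' Γ := by
  induction h with
  | id R Γ w p => intro R' _ _; exact Der.id _ _ _ _
  | orr _ ih => intro R' h1 h2; exact Der.orr (ih R' h1 h2)
  | andr _ _ ih1 ih2 => intro R' h1 h2; exact Der.andr (ih1 R' h1 h2) (ih2 R' h1 h2)
  | @boxr R Γ w u x φ hf _ ih =>
    intro R' h1 h2
    refine Der.boxr (u := u) ?_ (ih _ (Multiset.cons_subset_cons h1) ?_)
    · rintro (⟨y, a, b, hm, hv⟩ | hm)
      · exact hf (Or.inl ⟨y, a, b, h1 hm, hv⟩)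
      · exact hf (Or.inr hm)
    · intro y a b hm
      rcases Multiset.mem_cons.1 hm with hm | hm
      · exact propCond_of_mem (Multiset.mem_cons.2 (Or.inl hm))
      · exact (h2 _ _ _ hm).mono (Multiset.subset_cons _ _)
  | diar _ _ ih =>
    intro R' h1 h2
    exact Der.pr trivial (h2 _ _ _ (Multiset.mem_cons_self _ _)) (ih R' h1 h2)
  | pr _ hp _ ih =>
    intro R' h1 h2
    exact Der.pr trivial (h2.propCond hbar hp) (ih R' h1 h2)
  | @prodr R C Γ x s w u _ hx hc _ ih =>
    intro R' h1 h2
    refine ih R' (fun a ha => ?_) ?_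
    · have := h1 ha
      simp only [Multiset.mem_add, Multiset.mem_cons] at this ⊢
      tauto
    · intro y a b hm
      rcases Multiset.mem_add.1 hm with hm | hm
      · exact h2 _ _ _ (Multiset.mem_add.2 (Or.inl hm))
      rcases Multiset.mem_cons.1 hm with hm | hm
      · rw [Prod.mk.injEq, Prod.mk.injEq] at hm
        obtain ⟨rfl, rfl, rfl⟩ := hm
        refine h2.propCond hbar ⟨s, (hc.path bar).mono ?_, ?_⟩
        · exact fun z hz => Multiset.mem_add.2 (Or.inl hz)
        · exact Relation.ReflTransGen.single ⟨[], [], y, s, hx, by simp, by simp⟩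
      · exact h2 _ _ _ (Multiset.mem_add.2 (Or.inr hm))
  | cnvr hF _ _ => exact hF.elim

/-- Let `S` be a CFCST system over `Σ`.  For every `x → s ∈ S`
the structural rule `(p^x_s)` is eliminable in
`G3Km(S) + {(Pr_⟨x⟩) : x ∈ Σ} − {(C1^x) : x ∈ Σ}`: every labelled sequent
derivable in the calculus with rules `(id)`, `(∨r)`, `(∧r)`, `([x])`, `(⟨x⟩)`,
the propagation rules `(Pr_⟨x⟩)` and the structural rules `(p^x_s)` is derivable
in this calculus without any use of the rules `(p^x_s)`. -/
theorem prod_eliminable {α : Type} (bar : α → α) (hbar : Function.Involutive bar)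
    (S : CFCST α bar) (R : RAtms α) (Γ : LFmls α)
    (h : Der bar S.rules True True True False R Γ) :
    Der bar S.rules True True False False R Γ := by
  exact elim_aux bar hbar S R Γ h R (fun _ h => h) (fun _ _ _ hm => propCond_of_mem hm)

end GrammarLogic
end

section
/- Let S be a CFCST system over Σ. Every labelled sequent derivable in Km(S)L + Str(Km) (i.e. Km(S)L extended with label substitution, weakening, contraction of relational atoms, contraction of labelled formulae, and cut) is derivable in G3Km(S). -/
/-!
Labelled sequent calculi for context-free grammar logics with converse.
-/

namespace GrammarLogic

/-- Substitution of the label `w` for the label `u`. -/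
def substLbl (w u v : ℕ) : ℕ := if v = u then w else v

/-- Label substitution on relational atoms. -/
def substRAtms {α : Type} (w u : ℕ) (R : RAtms α) : RAtms α :=
  R.map fun t => (t.1, substLbl w u t.2.1, substLbl w u t.2.2)

/-- Label substitution on labelled formulae. -/
def substLFmls {α : Type} (w u : ℕ) (Γ : LFmls α) : LFmls α :=
  Γ.map fun t => (substLbl w u t.1, t.2)

/-- The negation-normal-form negation `φ̄` of a formula `φ`. -/
def Fml.negnnf {α : Type} : Fml α → Fml α
  | Fml.pos p => Fml.neg p
  | Fml.neg p => Fml.pos p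
  | Fml.or φ ψ => Fml.and φ.negnnf ψ.negnnf
  | Fml.and φ ψ => Fml.or φ.negnnf ψ.negnnf
  | Fml.dia x φ => Fml.box x φ.negnnf
  | Fml.box x φ => Fml.dia x φ.negnnf

/-- The calculus `Km(S)L + Str(Km)`: the refined labelled calculus `Km(S)L`
extended with label substitution, weakening, contraction of relational atoms,
contraction of labelled formulae, and cut. -/
inductive KmLStr {α : Type} (bar : α → α) (P : Set (α × List α)) :
    RAtms α → LFmls α → Prop
  | id (R : RAtms α) (Γ : LFmls α) (w p : ℕ) :
      KmLStr bar P R ((w, Fml.pos p) ::ₘ (w, Fml.neg p) ::ₘ Γ)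
  | orr {R : RAtms α} {Γ : LFmls α} {w : ℕ} {φ ψ : Fml α} :
      KmLStr bar P R ((w, φ) ::ₘ (w, ψ) ::ₘ Γ) →
      KmLStr bar P R ((w, Fml.or φ ψ) ::ₘ Γ)
  | andr {R : RAtms α} {Γ : LFmls α} {w : ℕ} {φ ψ : Fml α} :
      KmLStr bar P R ((w, φ) ::ₘ Γ) → KmLStr bar P R ((w, ψ) ::ₘ Γ) →
      KmLStr bar P R ((w, Fml.and φ ψ) ::ₘ Γ)
  | boxr {R : RAtms α} {Γ : LFmls α} {w u : ℕ} {x : α} {φ : Fml α} :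
      ¬ occursIn u R ((w, Fml.box x φ) ::ₘ Γ) →
      KmLStr bar P ((x, w, u) ::ₘ R) ((u, φ) ::ₘ Γ) →
      KmLStr bar P R ((w, Fml.box x φ) ::ₘ Γ)
  | pr {R : RAtms α} {Γ : LFmls α} {w u : ℕ} {x : α} {φ : Fml α} :
      PropCond bar P R x w u →
      KmLStr bar P R ((w, Fml.dia x φ) ::ₘ (u, φ) ::ₘ Γ) →
      KmLStr bar P R ((w, Fml.dia x φ) ::ₘ Γ)
  | subst {R : RAtms α} {Γ : LFmls α} (w u : ℕ) :
      KmLStr bar P R Γ → KmLStr bar P (substRAtms w u R) (substLFmls w u Γ)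
  | wk {R R' : RAtms α} {Γ Γ' : LFmls α} :
      KmLStr bar P R Γ → KmLStr bar P (R + R') (Γ + Γ')
  | ctrR {R : RAtms α} {Γ : LFmls α} (a : α × ℕ × ℕ) :
      KmLStr bar P (a ::ₘ a ::ₘ R) Γ → KmLStr bar P (a ::ₘ R) Γ
  | ctrF {R : RAtms α} {Γ : LFmls α} (w : ℕ) (φ : Fml α) :
      KmLStr bar P R ((w, φ) ::ₘ (w, φ) ::ₘ Γ) → KmLStr bar P R ((w, φ) ::ₘ Γ)
  | cut {R : RAtms α} {Γ : LFmls α} (w : ℕ) (φ : Fml α) :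
      KmLStr bar P R ((w, φ) ::ₘ Γ) → KmLStr bar P R ((w, Fml.negnnf φ) ::ₘ Γ) →
      KmLStr bar P R Γ

/-! ### Semantics and soundness -/

/-- Truth of a formula at a world of a model with worlds `ℕ`. -/
def Sat {α : Type} (Rel : α → ℕ → ℕ → Prop) (V : ℕ → ℕ → Prop) : ℕ → Fml α → Prop
  | w, Fml.pos p => V w p
  | w, Fml.neg p => ¬ V w p
  | w, Fml.or φ ψ => Sat Rel V w φ ∨ Sat Rel V w ψ
  | w, Fml.and φ ψ => Sat Rel V w φ ∧ Sat Rel V w ψ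
  | w, Fml.dia x φ => ∃ u, Rel x w u ∧ Sat Rel V u φ
  | w, Fml.box x φ => ∀ u, Rel x w u → Sat Rel V u φ

theorem sat_negnnf {α : Type} (Rel : α → ℕ → ℕ → Prop) (V : ℕ → ℕ → Prop) (φ : Fml α) :
    ∀ w, Sat Rel V w φ.negnnf ↔ ¬ Sat Rel V w φ := by
  induction φ with
  | pos p => intro w; simp [Sat, Fml.negnnf]
  | neg p => intro w; simp [Sat, Fml.negnnf]
  | or φ ψ ih1 ih2 => intro w; simp [Sat, Fml.negnnf, ih1, ih2]
  | and φ ψ ih1 ih2 => intro w; simp only [Sat, Fml.negnnf, ih1, ih2]; tauto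
  | dia x φ ih => intro w; simp [Sat, Fml.negnnf, ih]
  | box x φ ih => intro w; simp [Sat, Fml.negnnf, ih]

/-- There is a path with string `s` from `w` to `u` in a model. -/
def MPath {α : Type} (Rel : α → ℕ → ℕ → Prop) : List α → ℕ → ℕ → Prop
  | [], w, u => w = u
  | y :: s, w, u => ∃ v, Rel y w v ∧ MPath Rel s v u

theorem mpath_append {α : Type} (Rel : α → ℕ → ℕ → Prop) (s t : List α) :
    ∀ w u, MPath Rel (s ++ t) w u ↔ ∃ v, MPath Rel s w v ∧ MPath Rel t v u := by
  induction s with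
  | nil => intro w u; simp [MPath]
  | cons y s ih =>
    intro w u
    simp only [List.cons_append, MPath, ih]
    constructor
    · rintro ⟨v, h, v', h1, h2⟩; exact ⟨v', ⟨v, h, h1⟩, h2⟩
    · rintro ⟨v', ⟨v, h, h1⟩, h2⟩; exact ⟨v, h, v', h1, h2⟩

/-- Models: closed under converses and productions. -/
structure IsModel {α : Type} (bar : α → α) (P : Set (α × List α))
    (Rel : α → ℕ → ℕ → Prop) : Prop where
  conv : ∀ x w u, Rel x w u → Rel (bar x) u w
  prod : ∀ x s w u, (x, s) ∈ P → MPath Rel s w u → Rel x w u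

theorem mpath_of_lang {α : Type} {bar : α → α} {P : Set (α × List α)}
    {Rel : α → ℕ → ℕ → Prop} (hM : IsModel bar P Rel) {s t : List α}
    (h : Relation.ReflTransGen (OneStep P) s t) {w u : ℕ} (ht : MPath Rel t w u) :
    MPath Rel s w u := by
  induction h using Relation.ReflTransGen.head_induction_on with
  | refl => exact ht
  | head h1 _ ih =>
    obtain ⟨a, b, x, r, hP, rfl, rfl⟩ := h1
    rw [mpath_append] at ih
    obtain ⟨v, h2, h3⟩ := ih
    rw [mpath_append] at h2
    obtain ⟨v', h4, h5⟩ := h2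
    rw [mpath_append]
    exact ⟨v', h4, v, hM.prod _ _ _ _ hP h5, h3⟩

theorem mpath_of_ppath {α : Type} {bar : α → α} (hbar : Function.Involutive bar)
    {P : Set (α × List α)} {Rel : α → ℕ → ℕ → Prop} (hM : IsModel bar P Rel)
    {R : RAtms α} {f : ℕ → ℕ} (hR : ∀ x w u, (x, w, u) ∈ R → Rel x (f w) (f u))
    {w u : ℕ} {s : List α} (h : PPath bar R w u s) : MPath Rel s (f w) (f u) := by
  induction h with
  | nil w => rfl
  | cons he _ ih =>
    refine ⟨_, ?_, ih⟩
    rcases he with he | he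
    · exact hR _ _ _ he
    · have := hM.conv _ _ _ (hR _ _ _ he)
      rwa [hbar] at this

theorem sound {α : Type} {bar : α → α} (hbar : Function.Involutive bar)
    {P : Set (α × List α)} {Rel : α → ℕ → ℕ → Prop} (hM : IsModel bar P Rel)
    (V : ℕ → ℕ → Prop) {R : RAtms α} {Γ : LFmls α} (h : KmLStr bar P R Γ) :
    ∀ f : ℕ → ℕ, (∀ x w u, (x, w, u) ∈ R → Rel x (f w) (f u)) →
      ∃ w φ, (w, φ) ∈ Γ ∧ Sat Rel V (f w) φ := by
  induction h with
  | id R Γ w p =>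
    intro f _
    by_cases hV : V (f w) p
    · exact ⟨w, Fml.pos p, by simp, hV⟩
    · exact ⟨w, Fml.neg p, by simp, hV⟩
  | @orr R Γ w φ ψ _ ih =>
    intro f hR
    obtain ⟨v, χ, hm, hs⟩ := ih f hR
    simp only [Multiset.mem_cons, Prod.mk.injEq] at hm
    rcases hm with ⟨rfl, rfl⟩ | ⟨rfl, rfl⟩ | hm
    · exact ⟨v, _, Multiset.mem_cons_self _ _, Or.inl hs⟩
    · exact ⟨v, _, Multiset.mem_cons_self _ _, Or.inr hs⟩
    · exact ⟨v, χ, Multiset.mem_cons_of_mem hm, hs⟩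
  | @andr R Γ w φ ψ _ _ ih1 ih2 =>
    intro f hR
    obtain ⟨v, χ, hm, hs⟩ := ih1 f hR
    obtain ⟨v', χ', hm', hs'⟩ := ih2 f hR
    simp only [Multiset.mem_cons, Prod.mk.injEq] at hm hm'
    rcases hm with ⟨rfl, rfl⟩ | hm
    · rcases hm' with ⟨rfl, rfl⟩ | hm'
      · exact ⟨_, _, Multiset.mem_cons_self _ _, hs, hs'⟩
      · exact ⟨_, _, Multiset.mem_cons_of_mem hm', hs'⟩
    · exact ⟨_, _, Multiset.mem_cons_of_mem hm, hs⟩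
  | @boxr R Γ w u x φ hu _ ih =>
    intro f hR
    by_contra hcon
    push Not at hcon
    have h1 := hcon w _ (Multiset.mem_cons_self _ _)
    simp only [Sat, not_forall] at h1
    obtain ⟨z, hz, hz'⟩ := h1
    have hwu : w ≠ u := by
      rintro rfl
      exact hu (Or.inr ⟨_, Multiset.mem_cons_self _ _⟩)
    obtain ⟨v, χ, hm, hs⟩ := ih (Function.update f u z) (by
      intro y a b hab
      simp only [Multiset.mem_cons, Prod.mk.injEq] at hab
      rcases hab with ⟨rfl, rfl, rfl⟩ | hab
      · simpa [Function.update_of_ne hwu] using hz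
      · have ha : a ≠ u := by
          rintro rfl; exact hu (Or.inl ⟨_, _, _, hab, Or.inl rfl⟩)
        have hb : b ≠ u := by
          rintro rfl; exact hu (Or.inl ⟨_, _, _, hab, Or.inr rfl⟩)
        rw [Function.update_of_ne ha, Function.update_of_ne hb]
        exact hR _ _ _ hab)
    simp only [Multiset.mem_cons, Prod.mk.injEq] at hm
    rcases hm with ⟨rfl, rfl⟩ | hm
    · rw [Function.update_self] at hs
      exact hz' hs
    · have hv : v ≠ u := by
        rintro rfl; exact hu (Or.inr ⟨_, Multiset.mem_cons_of_mem hm⟩)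
      rw [Function.update_of_ne hv] at hs
      exact hcon v χ (Multiset.mem_cons_of_mem hm) hs
  | @pr R Γ w u x φ hc _ ih =>
    intro f hR
    obtain ⟨v, χ, hm, hs⟩ := ih f hR
    simp only [Multiset.mem_cons, Prod.mk.injEq] at hm
    rcases hm with ⟨rfl, rfl⟩ | ⟨rfl, rfl⟩ | hm
    · exact ⟨v, _, Multiset.mem_cons_self _ _, hs⟩
    · refine ⟨w, _, Multiset.mem_cons_self _ _, f v, ?_, hs⟩
      obtain ⟨s, hp, hl⟩ := hc
      obtain ⟨z, hz, hz'⟩ := mpath_of_lang hM hl (mpath_of_ppath hbar hM hR hp)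
      have : z = f v := hz'
      rwa [this] at hz
    · exact ⟨v, χ, Multiset.mem_cons_of_mem hm, hs⟩
  | @subst R Γ w u _ ih =>
    intro f hR
    obtain ⟨v, χ, hm, hs⟩ := ih (fun v => f (substLbl w u v)) (by
      intro x a b hab
      exact hR _ _ _ (Multiset.mem_map.2 ⟨_, hab, rfl⟩))
    exact ⟨_, χ, Multiset.mem_map.2 ⟨_, hm, rfl⟩, hs⟩
  | wk _ ih =>
    intro f hR
    obtain ⟨v, χ, hm, hs⟩ := ih f (fun x a b hab => hR _ _ _ (Multiset.mem_add.2 (Or.inl hab)))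
    exact ⟨v, χ, Multiset.mem_add.2 (Or.inl hm), hs⟩
  | ctrR a _ ih =>
    intro f hR
    exact ih f (fun x b c hb => hR _ _ _ (by simpa using hb))
  | ctrF w φ _ ih =>
    intro f hR
    obtain ⟨v, χ, hm, hs⟩ := ih f hR
    exact ⟨v, χ, by simpa using hm, hs⟩
  | @cut R Γ w φ _ _ ih1 ih2 =>
    intro f hR
    obtain ⟨v, χ, hm, hs⟩ := ih1 f hR
    obtain ⟨v', χ', hm', hs'⟩ := ih2 f hR
    simp only [Multiset.mem_cons, Prod.mk.injEq] at hm hm'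
    rcases hm with ⟨rfl, rfl⟩ | hm
    · rcases hm' with ⟨rfl, rfl⟩ | hm'
      · exact absurd hs ((sat_negnnf _ _ _ _).1 hs')
      · exact ⟨_, _, hm', hs'⟩
    · exact ⟨_, _, hm, hs⟩

/-! ### Completeness of the cut-free calculus by fair proof search -/

/-- The (compound) labelled formula has been decomposed. -/
def Treated {α : Type} (R : RAtms α) (H : LFmls α) (w : ℕ) : Fml α → Prop
  | Fml.pos _ => False
  | Fml.neg _ => False
  | Fml.or φ ψ => (w, φ) ∈ H ∧ (w, ψ) ∈ H
  | Fml.and φ ψ => (w, φ) ∈ H ∨ (w, ψ) ∈ H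
  | Fml.dia _ _ => False
  | Fml.box x φ => ∃ u, (x, w, u) ∈ R ∧ (u, φ) ∈ H

/-- Literals and diamonds. -/
def Passive {α : Type} : Fml α → Prop
  | Fml.pos _ => True
  | Fml.neg _ => True
  | Fml.or _ _ => False
  | Fml.and _ _ => False
  | Fml.dia _ _ => True
  | Fml.box _ _ => False

theorem Treated.mono {α : Type} {R R' : RAtms α} {H H' : LFmls α} (hR : R ⊆ R') (hH : H ⊆ H')
    {w : ℕ} {φ : Fml α} (h : Treated R H w φ) : Treated R' H' w φ := by
  cases φ with
  | pos | neg | dia => exact h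
  | or φ ψ => exact ⟨hH h.1, hH h.2⟩
  | and φ ψ => exact h.imp (fun h => hH h) (fun h => hH h)
  | box x φ => obtain ⟨u, h1, h2⟩ := h; exact ⟨u, hR h1, hH h2⟩

/-- States of the proof search: an underivable sequent `R ⊢ Γ` together with the
multiset `H` of all labelled formulae seen so far. -/
structure SState {α : Type} (bar : α → α) (P : Set (α × List α)) : Type where
  R : RAtms α
  Γ : LFmls α
  H : LFmls α
  und : ¬ Der bar P True False True True R Γ
  sub : Γ ⊆ H
  inv : ∀ w φ, (w, φ) ∈ H → (w, φ) ∈ Γ ∨ Treated R H w φ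

/-- Extension of states. -/
def Ext {α : Type} {bar : α → α} {P : Set (α × List α)} (a b : SState bar P) : Prop :=
  a.R ⊆ b.R ∧ a.H ⊆ b.H

theorem Ext.rfl' {α : Type} {bar : α → α} {P : Set (α × List α)} (a : SState bar P) : Ext a a :=
  ⟨fun _ h => h, fun _ h => h⟩

theorem Ext.trans' {α : Type} {bar : α → α} {P : Set (α × List α)} {a b c : SState bar P}
    (h : Ext a b) (h' : Ext b c) : Ext a c :=
  ⟨fun _ x => h'.1 (h.1 x), fun _ x => h'.2 (h.2 x)⟩

/-- Add relational atoms to a state. -/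
theorem ext_rel {α : Type} {bar : α → α} {P : Set (α × List α)} (a : SState bar P)
    {R' : RAtms α} (hR : a.R ⊆ R') (hu : ¬ Der bar P True False True True R' a.Γ) :
    ∃ b : SState bar P, Ext a b ∧ b.R = R' :=
  ⟨⟨R', a.Γ, a.H, hu, a.sub, fun w φ h => (a.inv w φ h).imp_right
    (Treated.mono hR (fun _ h => h))⟩, ⟨hR, fun _ h => h⟩, rfl⟩

/-- Replace a principal formula by new formulae in a state. -/
theorem ext_fml {α : Type} {bar : α → α} {P : Set (α × List α)} (a : SState bar P)
    {R' : RAtms α} {Γ Δ : LFmls α} {w : ℕ} {φ : Fml α} (hΓ : a.Γ = (w, φ) ::ₘ Γ)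
    (hR : a.R ⊆ R') (hu : ¬ Der bar P True False True True R' (Δ + Γ))
    (ht : (w, φ) ∈ Δ ∨ Treated R' (Δ + a.H) w φ) :
    ∃ b : SState bar P, Ext a b ∧ b.R = R' ∧ b.H = Δ + a.H := by
  have hsub : a.H ⊆ Δ + a.H := fun _ h => Multiset.mem_add.2 (Or.inr h)
  refine ⟨⟨R', Δ + Γ, Δ + a.H, hu, ?_, ?_⟩, ⟨hR, hsub⟩, rfl, rfl⟩
  · intro h hh
    rcases Multiset.mem_add.1 hh with hh | hh
    · exact Multiset.mem_add.2 (Or.inl hh)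
    · exact hsub (a.sub (by rw [hΓ]; exact Multiset.mem_cons_of_mem hh))
  · intro v ψ hh
    rcases Multiset.mem_add.1 hh with hh | hh
    · exact Or.inl (Multiset.mem_add.2 (Or.inl hh))
    · rcases a.inv v ψ hh with h1 | h1
      · rw [hΓ] at h1
        rcases Multiset.mem_cons.1 h1 with h1 | h1
        · obtain ⟨rfl, rfl⟩ := Prod.mk.inj h1
          exact ht.imp_left (fun h => Multiset.mem_add.2 (Or.inl h))
        · exact Or.inl (Multiset.mem_add.2 (Or.inr h1))
      · exact Or.inr (h1.mono hR hsub)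

theorem exists_fresh {α : Type} (R : RAtms α) (Γ : LFmls α) : ∃ u, ¬ occursIn u R Γ := by
  classical
  let F : Finset ℕ := ((R.map fun t => t.2.1) + (R.map fun t => t.2.2) +
    (Γ.map fun t => t.1)).toFinset
  obtain ⟨u, hu⟩ := Infinite.exists_notMem_finset F
  refine ⟨u, fun h => hu ?_⟩
  simp only [F, Multiset.mem_toFinset, Multiset.mem_add, Multiset.mem_map]
  rcases h with ⟨x, w, v, hm, rfl | rfl⟩ | ⟨φ, hm⟩
  · exact Or.inl (Or.inl ⟨_, hm, rfl⟩)
  · exact Or.inl (Or.inr ⟨_, hm, rfl⟩)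
  · exact Or.inr ⟨_, hm, rfl⟩

theorem step_treat {α : Type} {bar : α → α} {P : Set (α × List α)} (a : SState bar P)
    (w : ℕ) (φ : Fml α) (h : (w, φ) ∈ a.H) :
    ∃ b, Ext a b ∧ (Passive φ ∨ Treated b.R b.H w φ) := by
  rcases a.inv w φ h with h1 | h1
  swap
  · exact ⟨a, Ext.rfl' a, Or.inr h1⟩
  obtain ⟨Γ, hΓ⟩ := Multiset.exists_cons_of_mem h1
  have hund := a.und
  rw [hΓ] at hund
  cases φ with
  | pos | neg | dia => exact ⟨a, Ext.rfl' a, Or.inl trivial⟩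
  | or φ ψ =>
    obtain ⟨b, hb, h2, h3⟩ := ext_fml a (Δ := (w, φ) ::ₘ (w, ψ) ::ₘ 0) hΓ (fun _ h => h)
      (fun hd => hund (Der.orr (by simpa using hd))) (Or.inr ⟨by simp, by simp⟩)
    exact ⟨b, hb, Or.inr ⟨by simp [h3], by simp [h3]⟩⟩
  | and φ ψ =>
    by_cases hd : Der bar P True False True True a.R ((w, φ) ::ₘ Γ)
    · obtain ⟨b, hb, h2, h3⟩ := ext_fml a (Δ := (w, ψ) ::ₘ 0) hΓ (fun _ h => h)
        (fun hd' => hund (Der.andr hd (by simpa using hd'))) (Or.inr (Or.inr (by simp)))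
      exact ⟨b, hb, Or.inr (Or.inr (by simp [h3]))⟩
    · obtain ⟨b, hb, h2, h3⟩ := ext_fml a (Δ := (w, φ) ::ₘ 0) hΓ (fun _ h => h)
        (fun hd' => hd (by simpa using hd')) (Or.inr (Or.inl (by simp)))
      exact ⟨b, hb, Or.inr (Or.inl (by simp [h3]))⟩
  | box x φ =>
    obtain ⟨u, hu⟩ := exists_fresh a.R ((w, Fml.box x φ) ::ₘ Γ)
    obtain ⟨b, hb, h2, h3⟩ := ext_fml a (R' := (x, w, u) ::ₘ a.R) (Δ := (u, φ) ::ₘ 0) hΓ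
      (fun _ h => Multiset.mem_cons_of_mem h)
      (fun hd' => hund (Der.boxr hu (by simpa using hd')))
      (Or.inr ⟨u, by simp, by simp⟩)
    exact ⟨b, hb, Or.inr ⟨u, by simp [h2], by simp [h3]⟩⟩

theorem step_dia {α : Type} {bar : α → α} {P : Set (α × List α)} (a : SState bar P)
    (w u : ℕ) (x : α) (φ : Fml α) (h : (w, Fml.dia x φ) ∈ a.H) (hR : (x, w, u) ∈ a.R) :
    ∃ b, Ext a b ∧ (u, φ) ∈ b.H := by
  rcases a.inv _ _ h with h1 | h1
  swap
  · exact h1.elim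
  obtain ⟨Γ, hΓ⟩ := Multiset.exists_cons_of_mem h1
  obtain ⟨R, hR'⟩ := Multiset.exists_cons_of_mem hR
  have hund := a.und
  rw [hΓ, hR'] at hund
  obtain ⟨b, hb, h2, h3⟩ := ext_fml a (R' := a.R) (Δ := (w, Fml.dia x φ) ::ₘ (u, φ) ::ₘ 0) hΓ
    (fun _ h => h)
    (fun hd => hund (Der.diar trivial (by rw [hR'] at hd; simpa using hd))) (Or.inl (by simp))
  exact ⟨b, hb, by simp [h3]⟩

theorem und_cnv {α : Type} {bar : α → α} {P : Set (α × List α)} {R : RAtms α} {Γ : LFmls α}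
    (hu : ¬ Der bar P True False True True R Γ) {x : α} {w u : ℕ} (h : (x, w, u) ∈ R) :
    ¬ Der bar P True False True True ((bar x, u, w) ::ₘ R) Γ := by
  obtain ⟨R, rfl⟩ := Multiset.exists_cons_of_mem h
  intro hd
  rw [Multiset.cons_swap] at hd
  exact hu (Der.cnvr trivial hd)

theorem step_cnv {α : Type} {bar : α → α} {P : Set (α × List α)} (a : SState bar P)
    (x : α) (w u : ℕ) (hR : (x, w, u) ∈ a.R) :
    ∃ b, Ext a b ∧ (bar x, u, w) ∈ b.R := by
  obtain ⟨b, hb, h⟩ := ext_rel a (R' := (bar x, u, w) ::ₘ a.R)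
    (fun _ h => Multiset.mem_cons_of_mem h) (und_cnv a.und hR)
  exact ⟨b, hb, by simp [h]⟩

theorem und_dup {α : Type} {bar : α → α} (hbar : Function.Involutive bar)
    {P : Set (α × List α)} {R : RAtms α} {Γ : LFmls α}
    (hu : ¬ Der bar P True False True True R Γ) (C : RAtms α) (hC : C ⊆ R) :
    ∃ R', R ⊆ R' ∧ C ≤ R' ∧ ¬ Der bar P True False True True R' Γ := by
  induction C using Multiset.induction_on with
  | empty => exact ⟨R, fun _ h => h, Multiset.zero_le _, hu⟩
  | cons c C ih =>
    obtain ⟨x, w, u⟩ := c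
    obtain ⟨R', h1, h2, h3⟩ := ih (fun _ h => hC (Multiset.mem_cons_of_mem h))
    have h4 := und_cnv h3 (h1 (hC (Multiset.mem_cons_self _ _)))
    have h5 := und_cnv h4 (Multiset.mem_cons_self _ _)
    rw [hbar] at h5
    refine ⟨_, fun _ h => ?_, ?_, h5⟩
    · exact Multiset.mem_cons_of_mem (Multiset.mem_cons_of_mem (h1 h))
    · exact Multiset.cons_le_cons _ (h2.trans (Multiset.le_cons_self _ _))

theorem step_prod {α : Type} {bar : α → α} (hbar : Function.Involutive bar)
    {P : Set (α × List α)} (a : SState bar P) (x : α) (s : List α) (w u : ℕ)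
    (hP : (x, s) ∈ P) (C : RAtms α) (hc : ChainR s w u C) (hC : C ⊆ a.R) :
    ∃ b, Ext a b ∧ (x, w, u) ∈ b.R := by
  obtain ⟨R', h1, h2, h3⟩ := und_dup hbar a.und C hC
  obtain ⟨R, rfl⟩ := Multiset.le_iff_exists_add.1 h2
  have h4 : ¬ Der bar P True False True True (C + ((x, w, u) ::ₘ R)) a.Γ :=
    fun hd => h3 (Der.prodr trivial hP hc hd)
  obtain ⟨b, hb, h⟩ := ext_rel a (R' := C + ((x, w, u) ::ₘ R)) (fun _ h => by
    rw [Multiset.add_cons]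
    exact Multiset.mem_cons_of_mem (h1 h)) h4
  exact ⟨b, hb, by simp [h]⟩

/-- Finitely many persistent, always achievable tasks can be achieved jointly. -/
theorem do_all {α : Type} {bar : α → α} {P : Set (α × List α)} {ι : Type}
    (Done : ι → SState bar P → Prop)
    (hmono : ∀ i a b, Ext a b → Done i a → Done i b) (T : Multiset ι) (a : SState bar P)
    (hd : ∀ i ∈ T, ∀ b, Ext a b → ∃ c, Ext b c ∧ Done i c) :
    ∃ b, Ext a b ∧ ∀ i ∈ T, Done i b := by
  induction T using Multiset.induction_on with
  | empty => exact ⟨a, Ext.rfl' a, by simp⟩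
  | cons i T ih =>
    obtain ⟨b, hb, hT⟩ := ih (fun j hj => hd j (Multiset.mem_cons_of_mem hj))
    obtain ⟨c, hc, hi⟩ := hd i (Multiset.mem_cons_self _ _) b hb
    refine ⟨c, hb.trans' hc, fun j hj => ?_⟩
    rcases Multiset.mem_cons.1 hj with rfl | hj
    · exact hi
    · exact hmono _ _ _ hc (hT j hj)

/-- All requirements present in `a` (with labels below `n`) are met in `b`. -/
structure Big {α : Type} {bar : α → α} {P : Set (α × List α)} (n : ℕ)
    (a b : SState bar P) : Prop where
  ext : Ext a b
  treat : ∀ w φ, (w, φ) ∈ a.H → Passive φ ∨ Treated b.R b.H w φ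
  dia : ∀ w u x φ, (w, Fml.dia x φ) ∈ a.H → (x, w, u) ∈ a.R → (u, φ) ∈ b.H
  cnv : ∀ x w u, (x, w, u) ∈ a.R → (bar x, u, w) ∈ b.R
  prod : ∀ x s w u C, (x, s) ∈ P → w < n → u < n → ChainR s w u C → C ⊆ a.R → (x, w, u) ∈ b.R

theorem exists_big {α : Type} {bar : α → α} (hbar : Function.Involutive bar)
    {P : Set (α × List α)} (hP : P.Finite) (n : ℕ) (a : SState bar P) : ∃ b, Big n a b := by
  obtain ⟨b1, e1, h1⟩ := do_all
    (fun (i : ℕ × Fml α) b => Passive i.2 ∨ Treated b.R b.H i.1 i.2)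
    (fun i b c hbc h => h.imp_right (Treated.mono hbc.1 hbc.2)) a.H a
    (fun i hi b hb => step_treat b i.1 i.2 (hb.2 hi))
  obtain ⟨b2, e2, h2⟩ := do_all
    (fun (i : (ℕ × Fml α) × (α × ℕ × ℕ)) b => ∀ w u x φ, i.1 = (w, Fml.dia x φ) →
      i.2 = (x, w, u) → (u, φ) ∈ b.H)
    (fun i b c hbc h w u x φ e e' => hbc.2 (h w u x φ e e')) (a.H ×ˢ a.R) b1
    (by
      rintro ⟨⟨w, φ⟩, ⟨x, w', u⟩⟩ hi b hb
      have hi' := Multiset.mem_product.1 hi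
      by_cases hh : w' = w ∧ ∃ ψ, φ = Fml.dia x ψ
      · obtain ⟨rfl, ψ, rfl⟩ := hh
        obtain ⟨c, hc, hm⟩ := step_dia b w' u x ψ (hb.2 (e1.2 hi'.1)) (hb.1 (e1.1 hi'.2))
        refine ⟨c, hc, ?_⟩
        intro w2 u2 x2 φ2 e e'
        simp only [Prod.mk.injEq, Fml.dia.injEq] at e e'
        obtain ⟨-, -, rfl⟩ := e
        obtain ⟨-, -, rfl⟩ := e'
        exact hm
      · refine ⟨b, Ext.rfl' b, ?_⟩
        intro w2 u2 x2 φ2 e e'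
        simp only [Prod.mk.injEq] at e e'
        obtain ⟨rfl, rfl⟩ := e
        obtain ⟨rfl, rfl, rfl⟩ := e'
        exact absurd ⟨rfl, _, rfl⟩ hh)
  have e2' := e1.trans' e2
  obtain ⟨b3, e3, h3⟩ := do_all
    (fun (i : α × ℕ × ℕ) b => (bar i.1, i.2.2, i.2.1) ∈ b.R)
    (fun i b c hbc h => hbc.1 h) a.R b2
    (fun i hi b hb => step_cnv b i.1 i.2.1 i.2.2 (hb.1 (e2'.1 hi)))
  have e3' := e2'.trans' e3
  obtain ⟨b4, e4, h4⟩ := do_all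
    (fun (i : (α × List α) × (ℕ × ℕ)) b => ∀ C, ChainR i.1.2 i.2.1 i.2.2 C → C ⊆ a.R →
      (i.1.1, i.2.1, i.2.2) ∈ b.R)
    (fun i b c hbc h C hC hC' => hbc.1 (h C hC hC'))
    (hP.toFinset.val ×ˢ (Multiset.range n ×ˢ Multiset.range n)) b3
    (by
      rintro ⟨⟨x, s⟩, ⟨w, u⟩⟩ hi b hb
      have hi' := (Multiset.mem_product.1 hi).1
      have hxs : (x, s) ∈ P := by simpa using hi'
      by_cases hh : ∃ C, ChainR s w u C ∧ C ⊆ a.R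
      · obtain ⟨C, hC, hC'⟩ := hh
        obtain ⟨c, hc, hm⟩ := step_prod hbar b x s w u hxs C hC
          (fun _ h => hb.1 (e3'.1 (hC' h)))
        exact ⟨c, hc, fun _ _ _ => hm⟩
      · exact ⟨b, Ext.rfl' b, fun C hC hC' => absurd ⟨C, hC, hC'⟩ hh⟩)
  have e4' := e3'.trans' e4
  have e24 := e3.trans' e4
  refine ⟨b4, e4', ?_, ?_, ?_, ?_⟩
  · intro w φ h
    exact (h1 (w, φ) h).imp_right (Treated.mono (e2.trans' e24).1 (e2.trans' e24).2)
  · intro w u x φ h h'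
    exact e24.2 (h2 ((w, Fml.dia x φ), (x, w, u)) (Multiset.mem_product.2 ⟨h, h'⟩) w u x φ rfl rfl)
  · intro x w u h
    exact e4.1 (h3 (x, w, u) h)
  · intro x s w u C hxs hw hu hC hC'
    exact h4 ((x, s), (w, u)) (Multiset.mem_product.2 ⟨by simpa using hxs,
      Multiset.mem_product.2 ⟨by simpa using hw, by simpa using hu⟩⟩) C hC hC'

/-- A path through an increasing union lies in one of its members. -/
theorem chain_of_mpath {α : Type} {Rs : ℕ → RAtms α} (hmono : ∀ m n, m ≤ n → Rs m ⊆ Rs n)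
    (s : List α) : ∀ w u, MPath (fun x w u => ∃ n, (x, w, u) ∈ Rs n) s w u →
      ∃ n C, ChainR s w u C ∧ C ⊆ Rs n := by
  induction s with
  | nil =>
    intro w u h
    have : w = u := h
    subst this
    exact ⟨0, 0, ChainR.nil w, by simp⟩
  | cons y s ih =>
    rintro w u ⟨v, ⟨m, hm⟩, h⟩
    obtain ⟨n, C, hC, hC'⟩ := ih v u h
    refine ⟨max m n, _, ChainR.cons hC, ?_⟩
    intro c hc
    rcases Multiset.mem_cons.1 hc with rfl | hc
    · exact hmono _ _ (le_max_left _ _) hm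
    · exact hmono _ _ (le_max_right _ _) (hC' hc)

theorem complete {α : Type} {bar : α → α} (hbar : Function.Involutive bar)
    {P : Set (α × List α)} (hP : P.Finite) {R : RAtms α} {Γ : LFmls α}
    (hu : ¬ Der bar P True False True True R Γ) :
    ∃ (Rel : α → ℕ → ℕ → Prop) (V : ℕ → ℕ → Prop), IsModel bar P Rel ∧
      (∀ x w u, (x, w, u) ∈ R → Rel x w u) ∧ ∀ w φ, (w, φ) ∈ Γ → ¬ Sat Rel V w φ := by
  choose nxt hnxt using fun n a => exists_big (bar := bar) hbar hP n a
  obtain ⟨st, hR0, hH0, hst⟩ : ∃ st : ℕ → SState bar P, (st 0).R = R ∧ (st 0).H = Γ ∧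
      ∀ n, Big n (st n) (st (n + 1)) :=
    ⟨fun n => Nat.rec ⟨R, Γ, Γ, hu, fun _ h => h, fun _ _ h => Or.inl h⟩ (fun n a => nxt n a) n,
      rfl, rfl, fun n => hnxt n _⟩
  have hext : ∀ m n, m ≤ n → Ext (st m) (st n) := by
    intro m n h
    induction h with
    | refl => exact Ext.rfl' _
    | step _ ih => exact ih.trans' (hst _).ext
  let Rel : α → ℕ → ℕ → Prop := fun x w u => ∃ n, (x, w, u) ∈ (st n).R
  let V : ℕ → ℕ → Prop := fun w p => ∃ n, (w, Fml.neg p) ∈ (st n).H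
  have key : ∀ φ w n, (w, φ) ∈ (st n).H → ¬ Sat Rel V w φ := by
    intro φ
    induction φ with
    | pos p =>
      rintro w n h ⟨m, h'⟩
      have a1 := (hext n (max m n) (le_max_right _ _)).2 h
      have a2 := (hext m (max m n) (le_max_left _ _)).2 h'
      have b1 := ((st (max m n)).inv _ _ a1).resolve_right id
      have b2 := ((st (max m n)).inv _ _ a2).resolve_right id
      apply (st (max m n)).und
      obtain ⟨Δ, hΔ⟩ := Multiset.exists_cons_of_mem b1
      rw [hΔ] at b2
      have b3 : (w, Fml.neg p) ∈ Δ := by simpa using b2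
      obtain ⟨Δ', rfl⟩ := Multiset.exists_cons_of_mem b3
      rw [hΔ]
      exact Der.id _ _ _ _
    | neg p => intro w n h hs; exact hs ⟨n, h⟩
    | or φ ψ ih1 ih2 =>
      intro w n h hs
      have ht := ((hst n).treat _ _ h).resolve_left id
      exact hs.elim (ih1 w _ ht.1) (ih2 w _ ht.2)
    | and φ ψ ih1 ih2 =>
      intro w n h hs
      have ht := ((hst n).treat _ _ h).resolve_left id
      exact ht.elim (fun h => ih1 w _ h hs.1) (fun h => ih2 w _ h hs.2)
    | dia x φ ih =>
      rintro w n h ⟨u, ⟨m, hm⟩, hs⟩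
      exact ih u _ ((hst (max m n)).dia w u x φ ((hext n _ (le_max_right _ _)).2 h)
        ((hext m _ (le_max_left _ _)).1 hm)) hs
    | box x φ ih =>
      intro w n h hs
      obtain ⟨u, h1, h2⟩ := ((hst n).treat _ _ h).resolve_left id
      exact ih u _ h2 (hs u ⟨_, h1⟩)
  refine ⟨Rel, V, ⟨?_, ?_⟩, ?_, ?_⟩
  · rintro x w u ⟨n, h⟩
    exact ⟨n + 1, (hst n).cnv _ _ _ h⟩
  · intro x s w u hxs hp
    obtain ⟨n, C, hC, hC'⟩ := chain_of_mpath (Rs := fun n => (st n).R)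
      (fun m n h => (hext m n h).1) s w u hp
    refine ⟨n + w + u + 1 + 1, (hst (n + w + u + 1)).prod x s w u C hxs (by omega) (by omega) hC ?_⟩
    intro c hc
    exact (hext n (n + w + u + 1) (by omega)).1 (hC' hc)
  · intro x w u h
    exact ⟨0, by rw [hR0]; exact h⟩
  · intro w φ h
    exact key φ w 0 (by rw [hH0]; exact h)

/-- Let `S` be a CFCST system over `Σ`.  Every labelled sequent
derivable in `Km(S)L + Str(Km)` is derivable in `G3Km(S)`. -/
theorem kmLStr_to_g3Km {α : Type} (bar : α → α) (hbar : Function.Involutive bar)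
    (S : CFCST α bar) (R : RAtms α) (Γ : LFmls α)
    (h : KmLStr bar S.rules R Γ) : G3Km bar S R Γ := by
  by_contra hu
  obtain ⟨Rel, V, hM, hR, hΓ⟩ := complete hbar S.finite hu
  obtain ⟨w, φ, hm, hs⟩ := sound hbar hM V h (fun v => v) hR
  exact hΓ w φ hm hs

end GrammarLogic
end
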